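/- If {x_i} ⊆ ℤ[θ] is a |·|_θ-Cauchy sequence, then the sequence of Galois conjugates {x_i'} is a Cauchy sequence of real numbers (so Galois conjugation induces a well-defined ring homomorphism from the inframetric completion of ℤ[θ] to ℝ). -/

import Mathlib

/-!
If `x = p + qθ` has positive valuation `v`, then `x = θ^v · (± Σ b_i θ^i)` with digits
`0 ≤ b_i ≤ a`. Since `θ` is irrational, conjugation is well defined, and it turns this identity
into `x' = θ'^v · (± Σ b_i θ'^i)`. As `|θ'| = θ⁻¹ < 1`, the sum is dominated by a geometric series,
so `|x'| ≤ |x|_θ · a / (1 - θ⁻¹)` (`abs_conj_le`). Applied to differences of terms, this bound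
transports the Cauchy property. The pairs `(x, x')` are handled through the relation `ConjPair`,
which is closed under ring operations and, by irrationality, is functional
(`ConjPair.unique`).
-/

noncomputable section

/-- The real quadratic unit `θ = (a + √(a²+4))/2`, the positive root of `θ² = aθ + 1`
(the norm `N(θ) = −1` case). -/
def theta (a : ℕ) : ℝ := ((a : ℝ) + Real.sqrt ((a : ℝ) ^ 2 + 4)) / 2

/-- The Galois conjugate `θ' = −θ⁻¹`. -/
def thetaConj (a : ℕ) : ℝ := -(theta a)⁻¹

/-- Membership in the ring `ℤ[θ]`. -/
def inOK (a : ℕ) (x : ℝ) : Prop := ∃ p q : ℤ, x = (p : ℝ) + (q : ℝ) * theta a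

/-- A finite integer sequence, supported in `[m, M]`, is admissible (norm `−1` case) if all its
entries lie in `{0, …, a}` and an entry equal to `a` is always followed (below) by a `0`. -/
def AdmissibleOn (a : ℕ) (m M : ℤ) (b : ℤ → ℤ) : Prop :=
  (∀ i, b i ≠ 0 → m ≤ i ∧ i ≤ M) ∧
  (∀ i, 0 ≤ b i ∧ b i ≤ (a : ℤ)) ∧
  (∀ i, b i = (a : ℤ) → b (i - 1) = 0)

/-- The set `ℤ_θ` of θ-integers: signed sums `± Σ_{i=0}^{M} b_i θ^i` with `(b_i)` admissible. -/
def Ztheta (a : ℕ) : Set ℝ :=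
  { x | ∃ (ε : ℤ) (M : ℤ) (b : ℤ → ℤ), (ε = 1 ∨ ε = -1) ∧ 0 ≤ M ∧
      AdmissibleOn a 0 M b ∧
      x = (ε : ℝ) * ∑ i ∈ Finset.Icc (0 : ℤ) M, (b i : ℝ) * theta a ^ i }

/-- `v(x) = max { k : ℤ | x / θ^k ∈ ℤ_θ }` (as a supremum in `ℤ`). -/
def vval (a : ℕ) (x : ℝ) : ℤ := sSup { k : ℤ | x / theta a ^ k ∈ Ztheta a }

/-- The θ-adic infranorm `|x|_θ = θ^{−v(x)}`, with `|0|_θ = 0`. -/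
def thNorm (a : ℕ) (x : ℝ) : ℝ := if x = 0 then 0 else theta a ^ (-vval a x)

/-- A sequence in `ℝ` is `|·|_θ`-Cauchy. -/
def IsThCauchy (a : ℕ) (x : ℕ → ℝ) : Prop :=
  ∀ ε : ℝ, 0 < ε → ∃ N : ℕ, ∀ i j : ℕ, N ≤ i → N ≤ j → thNorm a (x i - x j) < ε

lemma theta_sq (a : ℕ) : theta a ^ 2 = a * theta a + 1 := by
  have h : Real.sqrt ((a : ℝ) ^ 2 + 4) ^ 2 = (a : ℝ) ^ 2 + 4 := Real.sq_sqrt (by positivity)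
  unfold theta
  linear_combination h / 4

lemma one_lt_theta (a : ℕ) (ha : 1 ≤ a) : 1 < theta a := by
  have h1 : (1 : ℝ) ≤ a := by exact_mod_cast ha
  have h2 : (1 : ℝ) < Real.sqrt ((a : ℝ) ^ 2 + 4) := by
    rw [Real.lt_sqrt (by norm_num)]
    nlinarith
  unfold theta
  linarith

lemma thetaConj_sq (a : ℕ) (ha : 1 ≤ a) : thetaConj a ^ 2 = a * thetaConj a + 1 := by
  have h0 : theta a ≠ 0 := by linarith [one_lt_theta a ha]
  have h := theta_sq a
  unfold thetaConj
  field_simp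
  linear_combination -h

lemma theta_irrational (a : ℕ) (ha : 1 ≤ a) : Irrational (theta a) := by
  have hs : Irrational (Real.sqrt ((a ^ 2 + 4 : ℕ) : ℝ)) := by
    rw [irrational_sqrt_natCast_iff]
    rintro ⟨n, hn⟩
    -- `a² < a² + 4 < (a + 2)²` leaves only `a² + 4 = (a + 1)²`, which fails by parity.
    have h1 : a < n := by nlinarith
    have h2 : n < a + 2 := by nlinarith
    obtain rfl : n = a + 1 := by omega
    ring_nf at hn
    omega
  intro ⟨r, hr⟩
  apply hs
  refine ⟨2 * r - a, ?_⟩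
  push_cast
  rw [hr]
  unfold theta
  ring

/-- `ConjPair a x y` says that `x ∈ ℤ[θ]` and that `y` is its Galois conjugate. -/
def ConjPair (a : ℕ) (x y : ℝ) : Prop :=
  ∃ p q : ℤ, x = p + q * theta a ∧ y = p + q * thetaConj a

namespace ConjPair

variable {a : ℕ} {x y z w : ℝ}

lemma intCast (a : ℕ) (n : ℤ) : ConjPair a n n := ⟨n, 0, by simp, by simp⟩

lemma theta (a : ℕ) : ConjPair a (theta a) (thetaConj a) := ⟨0, 1, by simp, by simp⟩

lemma add (h : ConjPair a x y) (k : ConjPair a z w) : ConjPair a (x + z) (y + w) := by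
  obtain ⟨p, q, rfl, rfl⟩ := h
  obtain ⟨r, s, rfl, rfl⟩ := k
  exact ⟨p + r, q + s, by push_cast; ring, by push_cast; ring⟩

lemma mul (ha : 1 ≤ a) (h : ConjPair a x y) (k : ConjPair a z w) :
    ConjPair a (x * z) (y * w) := by
  obtain ⟨p, q, rfl, rfl⟩ := h
  obtain ⟨r, s, rfl, rfl⟩ := k
  refine ⟨p * r + q * s, p * s + q * r + a * q * s, ?_, ?_⟩
  · push_cast
    linear_combination (q * s : ℝ) * theta_sq a
  · push_cast
    linear_combination (q * s : ℝ) * thetaConj_sq a ha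

lemma pow (ha : 1 ≤ a) (h : ConjPair a x y) (n : ℕ) : ConjPair a (x ^ n) (y ^ n) := by
  induction n with
  | zero => simpa using intCast a 1
  | succ n ih => simpa only [pow_succ] using ih.mul ha h

lemma sum {ι : Type*} (s : Finset ι) (f g : ι → ℝ) (h : ∀ i ∈ s, ConjPair a (f i) (g i)) :
    ConjPair a (∑ i ∈ s, f i) (∑ i ∈ s, g i) := by
  classical
  induction s using Finset.induction_on with
  | empty => simpa using intCast a 0
  | insert i s hi ih =>
    rw [Finset.sum_insert hi, Finset.sum_insert hi]
    exact (h i (by simp)).add (ih fun j hj => h j (by simp [hj]))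

lemma unique (ha : 1 ≤ a) (h : ConjPair a x y) (k : ConjPair a x w) : y = w := by
  obtain ⟨p, q, rfl, rfl⟩ := h
  obtain ⟨r, s, hrs, rfl⟩ := k
  have hq : q = s := by
    by_contra hne
    have hne' : (q : ℝ) - s ≠ 0 := sub_ne_zero.mpr (by exact_mod_cast hne)
    refine theta_irrational a ha ⟨((r - p : ℤ) : ℚ) / ((q - s : ℤ) : ℚ), ?_⟩
    push_cast
    rw [div_eq_iff hne']
    linear_combination -hrs
  subst hq
  linear_combination hrs

end ConjPair

lemma geom_sum_Icc_le {r : ℝ} (h0 : 0 ≤ r) (h1 : r < 1) (M : ℤ) :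
    ∑ i ∈ Finset.Icc (0 : ℤ) M, r ^ i.toNat ≤ (1 - r)⁻¹ := by
  have hinj : Set.InjOn Int.toNat (Finset.Icc (0 : ℤ) M) := by
    intro i hi j hj hij
    simp only [Finset.coe_Icc, Set.mem_Icc] at hi hj
    omega
  rw [← Finset.sum_image (f := fun n : ℕ => r ^ n) hinj, ← tsum_geometric_of_lt_one h0 h1]
  exact (summable_geometric_of_lt_one h0 h1).sum_le_tsum _ fun n _ => pow_nonneg h0 n

/-- Conjugation contracts elements of infranorm less than `1`. This hypothesis makes the valuation
nonzero, so the supremum defining it is not a junk value and is attained. -/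
lemma abs_conj_le (a : ℕ) (ha : 1 ≤ a) {x y : ℝ} (h : ConjPair a x y) (hx : thNorm a x < 1) :
    |y| ≤ thNorm a x * (a * (1 - (theta a)⁻¹)⁻¹) := by
  have hθ := one_lt_theta a ha
  have hr0 : 0 ≤ (theta a)⁻¹ := by positivity
  have hr1 : (theta a)⁻¹ < 1 := inv_lt_one_of_one_lt₀ hθ
  by_cases hx0 : x = 0
  · subst hx0
    have : y = 0 := h.unique ha (by simpa using ConjPair.intCast a 0)
    simp [this, thNorm]
  rw [thNorm, if_neg hx0] at hx ⊢
  have hv : 0 < vval a x := by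
    by_contra hneg
    have := one_le_zpow₀ hθ.le (show 0 ≤ -vval a x by omega)
    linarith
  have hmem : x / theta a ^ vval a x ∈ Ztheta a := by
    have hne : {k : ℤ | x / theta a ^ k ∈ Ztheta a}.Nonempty := by
      by_contra hemp
      rw [Set.not_nonempty_iff_eq_empty] at hemp
      simp [vval, hemp] at hv
    have hbdd : BddAbove {k : ℤ | x / theta a ^ k ∈ Ztheta a} := by
      by_contra hunb
      simp [vval, Int.csSup_of_not_bddAbove hunb] at hv
    exact Int.csSup_mem hne hbdd
  obtain ⟨n, hn⟩ := Int.eq_ofNat_of_zero_le hv.le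
  rw [hn] at hmem ⊢
  obtain ⟨ε, M, b, hε, -, ⟨-, hb, -⟩, hsum⟩ := hmem
  rw [zpow_natCast, div_eq_iff (by positivity)] at hsum
  have hpair : ConjPair a x
      ((ε : ℝ) * (∑ i ∈ Finset.Icc (0 : ℤ) M, (b i : ℝ) * thetaConj a ^ i.toNat)
        * thetaConj a ^ n) := by
    rw [hsum]
    refine ((ConjPair.intCast a ε).mul ha (ConjPair.sum _ _ _ fun i hi => ?_)).mul ha
      ((ConjPair.theta a).pow ha n)
    refine (ConjPair.intCast a (b i)).mul ha ?_
    obtain ⟨k, rfl⟩ := Int.eq_ofNat_of_zero_le (Finset.mem_Icc.mp hi).1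
    simpa using (ConjPair.theta a).pow ha k
  rw [h.unique ha hpair]
  have habs : |thetaConj a| = (theta a)⁻¹ := by
    rw [thetaConj, abs_neg, abs_of_nonneg hr0]
  have hε1 : |(ε : ℝ)| = 1 := by rcases hε with rfl | rfl <;> simp
  have hS : |∑ i ∈ Finset.Icc (0 : ℤ) M, (b i : ℝ) * thetaConj a ^ i.toNat|
      ≤ a * (1 - (theta a)⁻¹)⁻¹ := by
    calc _ ≤ ∑ i ∈ Finset.Icc (0 : ℤ) M, |(b i : ℝ) * thetaConj a ^ i.toNat| :=
          Finset.abs_sum_le_sum_abs _ _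
      _ ≤ ∑ i ∈ Finset.Icc (0 : ℤ) M, (a : ℝ) * (theta a)⁻¹ ^ i.toNat := by
          refine Finset.sum_le_sum fun i _ => ?_
          rw [abs_mul, abs_pow, habs, abs_of_nonneg (by exact_mod_cast (hb i).1)]
          gcongr
          exact_mod_cast (hb i).2
      _ ≤ _ := by
          rw [← Finset.mul_sum]
          gcongr
          exact geom_sum_Icc_le hr0 hr1 M
  rw [abs_mul, abs_mul, abs_pow, habs, hε1, one_mul, zpow_neg, zpow_natCast, inv_pow, mul_comm]
  gcongr

/-- If `{x_i = p_i + q_i θ} ⊆ ℤ[θ]` is a `|·|_θ`-Cauchy sequence, then the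
sequence of Galois conjugates `{x_i' = p_i + q_i θ'}` is a Cauchy sequence of real numbers
(so conjugation induces a ring homomorphism from the inframetric completion of `ℤ[θ]` to `ℝ`). -/
theorem conjugates_cauchy (a : ℕ) (ha : 1 ≤ a) (p q : ℕ → ℤ)
    (hc : IsThCauchy a (fun i => (p i : ℝ) + (q i : ℝ) * theta a)) :
    CauchySeq (fun i => (p i : ℝ) + (q i : ℝ) * thetaConj a) := by
  have hθ := one_lt_theta a ha
  have hr1 : (theta a)⁻¹ < 1 := inv_lt_one_of_one_lt₀ hθ
  have ha' : (0 : ℝ) < a := by exact_mod_cast ha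
  have hC : 0 < a * (1 - (theta a)⁻¹)⁻¹ := mul_pos ha' (inv_pos.mpr (by linarith))
  rw [Metric.cauchySeq_iff]
  intro ε hε
  obtain ⟨N, hN⟩ := hc (min 1 (ε / (a * (1 - (theta a)⁻¹)⁻¹))) (lt_min one_pos (div_pos hε hC))
  refine ⟨N, fun i hi j hj => ?_⟩
  have hij := hN i j hi hj
  have hpair : ConjPair a (((p i : ℝ) + q i * theta a) - (p j + q j * theta a))
      (((p i : ℝ) + q i * thetaConj a) - (p j + q j * thetaConj a)) :=
    ⟨p i - p j, q i - q j, by push_cast; ring, by push_cast; ring⟩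
  rw [Real.dist_eq]
  refine (abs_conj_le a ha hpair (hij.trans_le (min_le_left _ _))).trans_lt ?_
  rw [← lt_div_iff₀ hC]
  exact hij.trans_le (min_le_right _ _)
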